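/- arXiv:2102.12571 — 3 statements merged into one kernel-verified Lean document; each statement's English description precedes it below -/
import Mathlib

section
/- For a finite MDP with discount factor 0 ≤ γ < 1, there exists a deterministic policy π : S → A whose value function V^π (the unique fixed point of T_π) equals the optimal value function V* (the unique fixed point of the Bellman optimality operator T). -/
open Finset

/-- The Bellman optimality operator of a finite MDP. -/
noncomputable def bellman {S A : Type*} [Fintype S] [Fintype A] [Nonempty A]
    (R : S → A → ℝ) (P : S → A → S → ℝ) (γ : ℝ) (V : S → ℝ) (s : S) : ℝ :=
  univ.sup' univ_nonempty fun a => R s a + γ * ∑ s', P s a s' * V s'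

/-- The policy evaluation operator of a finite MDP for a deterministic policy π. -/
noncomputable def policyEval {S A : Type*} [Fintype S]
    (R : S → A → ℝ) (P : S → A → S → ℝ) (γ : ℝ) (π : S → A) (V : S → ℝ) (s : S) : ℝ :=
  R s (π s) + γ * ∑ s', P s (π s) s' * V s'

theorem exists_policyEval_eq_bellman {S A : Type*} [Fintype S] [Fintype A] [Nonempty A]
    (R : S → A → ℝ) (P : S → A → S → ℝ) (γ : ℝ) (V : S → ℝ) :
    ∃ π : S → A, policyEval R P γ π V = bellman R P γ V := by
  choose π _ hπ using fun s =>
    exists_mem_eq_sup' univ_nonempty fun a => R s a + γ * ∑ s', P s a s' * V s'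
  exact ⟨π, funext fun s => (hπ s).symm⟩

theorem exists_optimal_policy_general {S A : Type*} [Fintype S] [Fintype A] [Nonempty A]
    (R : S → A → ℝ) (P : S → A → S → ℝ) (γ : ℝ) (Vstar : S → ℝ)
    (hfixstar : Function.IsFixedPt (bellman R P γ) Vstar) :
    ∃ π : S → A, Function.IsFixedPt (policyEval R P γ π) Vstar := by
  obtain ⟨π, hπ⟩ := exists_policyEval_eq_bellman R P γ Vstar
  exact ⟨π, hπ.trans hfixstar⟩

/-- There exists a deterministic policy whose value function equals the optimal value
function. -/
theorem exists_optimal_policy {S A : Type*} [Fintype S] [Nonempty S] [Fintype A] [Nonempty A]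
    (R : S → A → ℝ) (P : S → A → S → ℝ) (γ : ℝ)
    (hP0 : ∀ s a s', 0 ≤ P s a s') (hP1 : ∀ s a, ∑ s', P s a s' = 1)
    (hγ0 : 0 ≤ γ) (hγ1 : γ < 1)
    (Vstar : S → ℝ) (hfixstar : ∀ s, bellman R P γ Vstar s = Vstar s) :
    ∃ (π : S → A) (Vpi : S → ℝ),
      (∀ s, policyEval R P γ π Vpi s = Vpi s) ∧ ∀ s, Vpi s = Vstar s := by
  obtain ⟨π, hπ⟩ := exists_optimal_policy_general R P γ Vstar (funext hfixstar)
  exact ⟨π, Vstar, congrFun hπ, fun _ => rfl⟩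
end

section
/- Policy improvement: for a finite MDP with discount factor 0 ≤ γ < 1 and deterministic policies π, π' : S → A, if (T_{π'} V^π) s ≥ V^π s for all s ∈ S, then V^{π'} s ≥ V^π s for all s ∈ S, where V^π and V^{π'} are the unique fixed points of the policy evaluation operators T_π and T_{π'} respectively. -/
open Finset

/-- With `c = sup (V - W)`, the chain `V ≤ T V ≤ T (W + c) ≤ T W + γ c ≤ W + γ c` gives `c ≤ γ c`,
so `c` cannot be positive. Monotonicity and discounting are Blackwell's sufficient conditions for a
contraction. -/
theorem le_of_le_map_of_map_le_of_discounting {S : Type*} {T : (S → ℝ) → S → ℝ} {γ : ℝ}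
    (hγ : γ < 1) (hmono : Monotone T)
    (hdisc : ∀ V c, 0 ≤ c → ∀ s, T (fun s => V s + c) s ≤ T V s + γ * c)
    {V W : S → ℝ} (hbdd : BddAbove (Set.range fun s => V s - W s))
    (hV : V ≤ T V) (hW : T W ≤ W) : V ≤ W := by
  by_contra hVW
  obtain ⟨s₀, hs₀⟩ : ∃ s, W s < V s := by simpa only [Pi.le_def, not_forall, not_le] using hVW
  have : Nonempty S := ⟨s₀⟩
  set c := ⨆ s, (V s - W s)
  have hc_pos : 0 < c := (sub_pos.2 hs₀).trans_le (le_ciSup hbdd s₀)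
  have hV_le : V ≤ fun s => W s + c := fun s => sub_le_iff_le_add'.1 (le_ciSup hbdd s)
  have hc_le : c ≤ γ * c := ciSup_le fun s => sub_le_iff_le_add'.2 <|
    calc
      V s ≤ T V s := hV s
      _ ≤ T (fun s => W s + c) s := hmono hV_le s
      _ ≤ T W s + γ * c := hdisc W c hc_pos.le s
      _ ≤ W s + γ * c := by gcongr; exact hW s
  exact hc_le.not_gt (mul_lt_of_lt_one_left hc_pos hγ)

section PolicyEval

variable {S A : Type*} [Fintype S] {P : S → A → S → ℝ}

theorem policyEval_mono {γ : ℝ} (hP0 : ∀ s a s', 0 ≤ P s a s') (hγ0 : 0 ≤ γ)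
    (R : S → A → ℝ) (π : S → A) : Monotone (policyEval R P γ π) := by
  intro V W hVW s
  unfold policyEval
  gcongr with s'
  · exact hP0 s (π s) s'
  · exact hVW s'

theorem policyEval_add_const (hP1 : ∀ s a, ∑ s', P s a s' = 1)
    (R : S → A → ℝ) (γ : ℝ) (π : S → A) (V : S → ℝ) (c : ℝ) (s : S) :
    policyEval R P γ π (fun s' => V s' + c) s = policyEval R P γ π V s + γ * c := by
  simp only [policyEval, mul_add, sum_add_distrib, ← sum_mul, hP1, one_mul, add_assoc]

end PolicyEval

theorem policy_improvement_general {S A : Type*} [Fintype S]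
    (R : S → A → ℝ) (P : S → A → S → ℝ) (γ : ℝ) (π : S → A)
    (hP0 : ∀ s a s', 0 ≤ P s a s') (hP1 : ∀ s a, ∑ s', P s a s' = 1)
    (hγ0 : 0 ≤ γ) (hγ1 : γ < 1)
    (V W : S → ℝ) (hV : ∀ s, V s ≤ policyEval R P γ π V s)
    (hW : ∀ s, policyEval R P γ π W s ≤ W s) :
    ∀ s, V s ≤ W s :=
  le_of_le_map_of_map_le_of_discounting hγ1 (policyEval_mono hP0 hγ0 R π)
    (fun U c _ s => (policyEval_add_const hP1 R γ π U c s).le)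
    (Set.finite_range _).bddAbove hV hW

/-- Policy improvement: if applying π' 's evaluation operator to V^π improves on V^π
pointwise, then V^{π'} dominates V^π pointwise. -/
theorem policy_improvement {S A : Type*} [Fintype S] [Nonempty S] [Fintype A] [Nonempty A]
    (R : S → A → ℝ) (P : S → A → S → ℝ) (γ : ℝ) (π π' : S → A)
    (hP0 : ∀ s a s', 0 ≤ P s a s') (hP1 : ∀ s a, ∑ s', P s a s' = 1)
    (hγ0 : 0 ≤ γ) (hγ1 : γ < 1)
    (Vpi : S → ℝ) (hfixpi : ∀ s, policyEval R P γ π Vpi s = Vpi s)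
    (Vpi' : S → ℝ) (hfixpi' : ∀ s, policyEval R P γ π' Vpi' s = Vpi' s)
    (himp : ∀ s, Vpi s ≤ policyEval R P γ π' Vpi s) :
    ∀ s, Vpi s ≤ Vpi' s :=
  policy_improvement_general R P γ π' hP0 hP1 hγ0 hγ1 Vpi Vpi' himp fun s => (hfixpi' s).le
end

section
/- Logical Value Iteration converges: let F (FSA states), S (environment states), O (options), and E (event-proposition valuations) be nonempty finite sets; let R_F : F → ℝ and R_o : O → S → ℝ be reward models; let q : E → ℝ with q e ≥ 0 and ∑_e q e = 1; let T_F : F → S → E → F → ℝ with T_F f s' e f' ≥ 0 and ∑_{f'} T_F f s' e f' = 1 for all f, s', e; and let T : O → S → S → ℝ with T o s s' ≥ 0 and ∑_{s'} T o s s' ≤ γ for all o, s, where 0 ≤ γ < 1. Then the Logical Value Iteration operator L mapping V : F × S → ℝ to (L V)(f, s) = max_{o ∈ O} (R_F f * R_o o s + ∑_{f' ∈ F} ∑_{e ∈ E} ∑_{s' ∈ S} T_F f s' e f' * q e * T o s s' * V (f', s')) is γ-Lipschitz in the sup norm on F × S → ℝ, and hence has a unique fixed point to which its iterates converge from any initialization.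 -/
open Finset

/-- The Logical Value Iteration operator on the hierarchical SMDP that is the product of
a logical FSA (states `F`) and a low-level environment (states `S`), with options `O`
and event-proposition valuations `E`. -/
noncomputable def lviOperator {F S O E : Type*} [Fintype F] [Fintype S] [Fintype E]
    [Fintype O] [Nonempty O]
    (RF : F → ℝ) (Ro : O → S → ℝ) (q : E → ℝ)
    (TF : F → S → E → F → ℝ) (T : O → S → S → ℝ)
    (V : F × S → ℝ) (x : F × S) : ℝ :=
  univ.sup' univ_nonempty fun o =>
    RF x.1 * Ro o x.2 +
      ∑ f', ∑ e, ∑ s', TF x.1 s' e f' * q e * T o x.2 s' * V (f', s')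

/-!
For each option, the lookahead at a product state is an affine functional of `V`. Its
coefficients have `ℓ¹`-norm at most `γ`: summing out the FSA successor and then the valuation
leaves at most the mass of the option's transition model. A finite maximum of
`γ`-Lipschitz functionals is `γ`-Lipschitz, as is a map into a sup-normed space with `γ`-Lipschitz
coordinates, so Banach's fixed point theorem applies.
-/

open scoped NNReal

section SupMetric

variable {ι α : Type*} {X : ι → Type*}

theorem dist_pi_eq_sup' [Fintype ι] [Nonempty ι] [∀ i, PseudoMetricSpace (X i)]
    (f g : ∀ i, X i) : dist f g = univ.sup' univ_nonempty fun i => dist (f i) (g i) :=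
  eq_of_forall_ge_iff fun c => by
    simp only [dist_pi_le_iff', sup'_le_iff, mem_univ, true_imp_iff]

theorem lipschitzWith_pi [Fintype ι] [PseudoEMetricSpace α] [∀ i, PseudoEMetricSpace (X i)]
    {K : ℝ≥0} {f : α → ∀ i, X i} (hf : ∀ i, LipschitzWith K fun a => f a i) :
    LipschitzWith K f :=
  fun a b => edist_pi_le_iff.2 fun i => hf i a b

theorem lipschitzWith_finset_sup' [PseudoEMetricSpace α] {K : ℝ≥0} {s : Finset ι}
    (hs : s.Nonempty) {f : ι → α → ℝ} (hf : ∀ i ∈ s, LipschitzWith K (f i)) :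
    LipschitzWith K fun a => s.sup' hs fun i => f i a := by
  simp only [← Finset.sup'_apply]
  exact sup'_induction hs f (fun g hg h hh => max_self K ▸ hg.max hh) hf

theorem lipschitzWith_dotProduct {R : Type*} [NonUnitalSeminormedRing R] [Fintype ι]
    (a : ι → R) : LipschitzWith (∑ i, ‖a i‖₊) fun v : ι → R => a ⬝ᵥ v :=
  LipschitzWith.of_dist_le_mul fun v w => by
    rw [dist_eq_norm, dist_eq_norm, ← dotProduct_sub, NNReal.coe_sum, Finset.sum_mul]
    refine norm_sum_le_of_le univ fun i _ => (norm_mul_le _ _).trans ?_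
    gcongr
    exacts [(coe_nnnorm (a i)).ge, norm_le_pi_norm (v - w) i]

end SupMetric

section LogicalValueIteration

variable {F S O E : Type*} [Fintype F] [Fintype S] [Fintype E]

/-- The discounted transition kernel of the options on product states: the coefficient of `V y`
in the lookahead of option `o` at `x`. The valuation `e` is averaged out, and the FSA moves after
observing the environment successor `y.2`. -/
def lviKernel (q : E → ℝ) (TF : F → S → E → F → ℝ) (T : O → S → S → ℝ)
    (o : O) (x y : F × S) : ℝ :=
  ∑ e, TF x.1 y.2 e y.1 * q e * T o x.2 y.2

theorem lviKernel_dotProduct (q : E → ℝ) (TF : F → S → E → F → ℝ) (T : O → S → S → ℝ)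
    (o : O) (x : F × S) (V : F × S → ℝ) :
    lviKernel q TF T o x ⬝ᵥ V =
      ∑ f', ∑ e, ∑ s', TF x.1 s' e f' * q e * T o x.2 s' * V (f', s') := by
  simp only [dotProduct, lviKernel, Fintype.sum_prod_type, Finset.sum_mul]
  exact sum_congr rfl fun f' _ => sum_comm

theorem sum_abs_lviKernel_le {q : E → ℝ} {TF : F → S → E → F → ℝ} {T : O → S → S → ℝ} {γ : ℝ}
    (hq : ∑ e, |q e| ≤ 1) (hTF : ∀ f s' e, ∑ f', |TF f s' e f'| ≤ 1)
    (hT : ∀ o s, ∑ s', |T o s s'| ≤ γ) (o : O) (x : F × S) :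
    ∑ y, |lviKernel q TF T o x y| ≤ γ := by
  have sum_fsa_le (s' : S) : ∑ f', |lviKernel q TF T o x (f', s')| ≤ |T o x.2 s'| :=
    calc ∑ f', |lviKernel q TF T o x (f', s')|
        ≤ ∑ f', ∑ e, |TF x.1 s' e f'| * |q e| * |T o x.2 s'| := by
          simp only [← abs_mul]
          exact sum_le_sum fun f' _ => abs_sum_le_sum_abs _ _
      _ = (∑ e, (∑ f', |TF x.1 s' e f'|) * |q e|) * |T o x.2 s'| := by
          rw [sum_comm]
          simp only [Finset.sum_mul]
      _ ≤ (∑ e, 1 * |q e|) * |T o x.2 s'| := by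
          gcongr with e
          exact hTF x.1 s' e
      _ ≤ |T o x.2 s'| := by
          simpa only [one_mul] using mul_le_of_le_one_left (abs_nonneg _) hq
  rw [Fintype.sum_prod_type_right]
  exact (sum_le_sum fun s' _ => sum_fsa_le s').trans (hT o x.2)

variable [Fintype O] [Nonempty O]

theorem lipschitzWith_lviOperator (RF : F → ℝ) (Ro : O → S → ℝ) {q : E → ℝ}
    {TF : F → S → E → F → ℝ} {T : O → S → S → ℝ} {γ : ℝ≥0}
    (hK : ∀ o x, ∑ y, |lviKernel q TF T o x y| ≤ γ) :
    LipschitzWith γ (lviOperator RF Ro q TF T) := by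
  refine lipschitzWith_pi fun x => lipschitzWith_finset_sup' univ_nonempty fun o _ => ?_
  have norm_le : ∑ y, ‖lviKernel q TF T o x y‖₊ ≤ γ := by
    simpa only [← NNReal.coe_le_coe, NNReal.coe_sum, coe_nnnorm, Real.norm_eq_abs] using hK o x
  simp only [← lviKernel_dotProduct]
  simpa only [zero_add] using
    (LipschitzWith.const (RF x.1 * Ro o x.2)).add ((lipschitzWith_dotProduct _).weaken norm_le)

theorem lvi_converges_general [Nonempty F] [Nonempty S] (RF : F → ℝ) (Ro : O → S → ℝ)
    {q : E → ℝ} {TF : F → S → E → F → ℝ} {T : O → S → S → ℝ} {γ : ℝ≥0} (hγ : γ < 1)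
    (hq : ∑ e, |q e| ≤ 1) (hTF : ∀ f s' e, ∑ f', |TF f s' e f'| ≤ 1)
    (hT : ∀ o s, ∑ s', |T o s s'| ≤ γ) :
    (∀ V W : F × S → ℝ,
      (univ.sup' univ_nonempty fun x : F × S =>
          |lviOperator RF Ro q TF T V x - lviOperator RF Ro q TF T W x|) ≤
        γ * univ.sup' univ_nonempty fun x : F × S => |V x - W x|) ∧
    (∃ Vstar : F × S → ℝ, (∀ x, lviOperator RF Ro q TF T Vstar x = Vstar x) ∧
      (∀ V : F × S → ℝ, (∀ x, lviOperator RF Ro q TF T V x = V x) → V = Vstar) ∧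
      (∀ V₀ : F × S → ℝ,
        Filter.Tendsto (fun n => (lviOperator RF Ro q TF T)^[n] V₀)
          Filter.atTop (nhds Vstar))) := by
  have contracting : ContractingWith γ (lviOperator RF Ro q TF T) :=
    ⟨hγ, lipschitzWith_lviOperator RF Ro (sum_abs_lviKernel_le hq hTF hT)⟩
  refine ⟨fun V W => ?_, contracting.fixedPoint, congrFun contracting.fixedPoint_isFixedPt,
    fun V hV => contracting.fixedPoint_unique (funext hV), contracting.tendsto_iterate_fixedPoint⟩
  simpa only [dist_pi_eq_sup', Real.dist_eq] using contracting.toLipschitzWith.dist_le_mul V W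

end LogicalValueIteration

/-- Logical Value Iteration converges: the operator is a γ-contraction in the sup norm,
hence has a unique fixed point to which its iterates converge from any initialization. -/
theorem lvi_converges {F S O E : Type*} [Fintype F] [Nonempty F] [Fintype S] [Nonempty S]
    [Fintype O] [Nonempty O] [Fintype E] [Nonempty E]
    (RF : F → ℝ) (Ro : O → S → ℝ) (q : E → ℝ)
    (TF : F → S → E → F → ℝ) (T : O → S → S → ℝ) (γ : ℝ)
    (hγ0 : 0 ≤ γ) (hγ1 : γ < 1)
    (hq0 : ∀ e, 0 ≤ q e) (hq1 : ∑ e, q e = 1)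
    (hTF0 : ∀ f s' e f', 0 ≤ TF f s' e f') (hTF1 : ∀ f s' e, ∑ f', TF f s' e f' = 1)
    (hT0 : ∀ o s s', 0 ≤ T o s s') (hT1 : ∀ o s, ∑ s', T o s s' ≤ γ) :
    (∀ V W : F × S → ℝ,
      (univ.sup' univ_nonempty fun x : F × S =>
          |lviOperator RF Ro q TF T V x - lviOperator RF Ro q TF T W x|) ≤
        γ * univ.sup' univ_nonempty fun x : F × S => |V x - W x|) ∧
    (∃ Vstar : F × S → ℝ, (∀ x, lviOperator RF Ro q TF T Vstar x = Vstar x) ∧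
      (∀ V : F × S → ℝ, (∀ x, lviOperator RF Ro q TF T V x = V x) → V = Vstar) ∧
      (∀ V₀ : F × S → ℝ,
        Filter.Tendsto (fun n => (lviOperator RF Ro q TF T)^[n] V₀)
          Filter.atTop (nhds Vstar))) := by
  lift γ to ℝ≥0 using hγ0
  exact lvi_converges_general RF Ro (mod_cast hγ1) (by simp [abs_of_nonneg, hq0, hq1])
    (by simp [abs_of_nonneg, hTF0, hTF1]) (by simpa [abs_of_nonneg, hT0] using hT1)
end
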